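/- arXiv:1303.3732 — 3 statements merged into one kernel-verified Lean document; each statement's English description precedes it below -/
import Mathlib

section
/- Let K be a finite nonempty index type, and let Λ, α, β : K → ℝ, λ ∈ ℝ and q : K → ℝ satisfy: 0 ≤ q k ≤ 1 for all k, Σ_k q k = 1, α k ≥ 0 and β k ≥ 0 for all k, the stationarity conditions λ + α k − β k = Λ k for all k, and the complementary slackness conditions α k · (q k − 1) = 0 and β k · q k = 0 for all k. If there exist k' ≠ k'' with 0 < q k' < 1 and 0 < q k'' < 1, then Λ k' = Λ k'' and Λ k' ≥ Λ k for every k ∈ K. -/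
theorem stmt_7 {K : Type*} [Fintype K] [Nonempty K]
    (Λ α β q : K → ℝ) (lam : ℝ)
    (hq0 : ∀ k, 0 ≤ q k) (hq1 : ∀ k, q k ≤ 1)
    (hsum : ∑ k, q k = 1)
    (hα : ∀ k, 0 ≤ α k) (hβ : ∀ k, 0 ≤ β k)
    (hstat : ∀ k, lam + α k - β k = Λ k)
    (hcs1 : ∀ k, α k * (q k - 1) = 0) (hcs2 : ∀ k, β k * q k = 0)
    (k' k'' : K) (hne : k' ≠ k'')
    (hk'0 : 0 < q k') (hk'1 : q k' < 1)
    (hk''0 : 0 < q k'') (hk''1 : q k'' < 1) :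
    Λ k' = Λ k'' ∧ ∀ k, Λ k ≤ Λ k' := by
  classical
  have key : ∀ k j, j ≠ k → 0 < q j → q k < 1 := by
    intro k j hjk hj
    have h : ∑ i ∈ ({k, j} : Finset K), q i ≤ ∑ i, q i :=
      Finset.sum_le_sum_of_subset_of_nonneg (Finset.subset_univ _) (fun i _ _ => hq0 i)
    rw [Finset.sum_pair hjk.symm, hsum] at h
    linarith
  have hlt : ∀ k, q k < 1 := by
    intro k
    by_cases h : k' = k
    · exact h ▸ hk'1
    · exact key k k' h hk'0
  have hα0 : ∀ k, α k = 0 := by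
    intro k
    rcases mul_eq_zero.mp (hcs1 k) with h | h
    · exact h
    · linarith [hlt k]
  have hβ' : β k' = 0 := (mul_eq_zero.mp (hcs2 k')).resolve_right hk'0.ne'
  have hβ'' : β k'' = 0 := (mul_eq_zero.mp (hcs2 k'')).resolve_right hk''0.ne'
  refine ⟨?_, fun k => ?_⟩
  · linarith [hstat k', hstat k'', hα0 k', hα0 k'']
  · linarith [hstat k', hstat k, hα0 k', hα0 k, hβ k]
end

section
/- Let K be a finite nonempty index type, and let Λ, α, β : K → ℝ, λ ∈ ℝ and q : K → ℝ satisfy: 0 ≤ q k ≤ 1 for all k, Σ_k q k = 1, α k ≥ 0 and β k ≥ 0 for all k, the stationarity conditions λ + α k − β k = Λ k for all k, and the complementary slackness conditions α k · (q k − 1) = 0 and β k · q k = 0 for all k. If q k* = 1 for some k* ∈ K, then Λ k* ≥ Λ k for every k ∈ K. -/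
theorem stmt_8 {K : Type*} [Fintype K] [Nonempty K]
    (Λ α β q : K → ℝ) (lam : ℝ)
    (hq0 : ∀ k, 0 ≤ q k) (hq1 : ∀ k, q k ≤ 1)
    (hsum : ∑ k, q k = 1)
    (hα : ∀ k, 0 ≤ α k) (hβ : ∀ k, 0 ≤ β k)
    (hstat : ∀ k, lam + α k - β k = Λ k)
    (hcs1 : ∀ k, α k * (q k - 1) = 0) (hcs2 : ∀ k, β k * q k = 0)
    (kstar : K) (hkstar : q kstar = 1) :
    ∀ k, Λ k ≤ Λ kstar := by
  classical
  intro k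
  by_cases hk : k = kstar
  · rw [hk]
  have hpair : q k + q kstar ≤ ∑ j, q j := by
    rw [← Finset.sum_pair hk]
    exact Finset.sum_le_sum_of_subset_of_nonneg (Finset.subset_univ _)
      (fun j _ _ => hq0 j)
  have hqk : q k = 0 := by
    have := hq0 k
    linarith
  have h1 := hcs1 k
  rw [hqk] at h1
  have h2 := hcs2 kstar
  rw [hkstar] at h2
  have := hstat k
  have := hstat kstar
  have := hα kstar
  have := hβ k
  linarith
end

section
/- Let (Ω, 𝔉, P) be a probability space and f, g : Ω → ℝ nonnegative integrable measurable functions with g(ω) > 0 for P-almost every ω. For θ ∈ [0,1] define A_θ := { ω : (1−θ)·f(ω) ≥ θ·g(ω) } and h(θ) := ∫_{A_θ} f dP − ∫_{A_θᶜ} g dP. Then h is nonincreasing on [0,1], h(0) = ∫ f dP ≥ 0, and h(1) = −∫ g dP ≤ 0. -/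
open MeasureTheory

theorem stmt_15 {Ω : Type*} [MeasurableSpace Ω] (P : Measure Ω) [IsProbabilityMeasure P]
    (f g : Ω → ℝ) (hf : Measurable f) (hg : Measurable g)
    (hf0 : ∀ ω, 0 ≤ f ω) (hg0 : ∀ ω, 0 ≤ g ω)
    (hfi : Integrable f P) (hgi : Integrable g P)
    (hgpos : ∀ᵐ ω ∂P, 0 < g ω)
    (A : ℝ → Set Ω) (hA : ∀ θ, A θ = {ω | θ * g ω ≤ (1 - θ) * f ω})
    (h : ℝ → ℝ)
    (hh : ∀ θ, h θ = (∫ ω in A θ, f ω ∂P) - (∫ ω in (A θ)ᶜ, g ω ∂P)) :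
    AntitoneOn h (Set.Icc 0 1) ∧
    h 0 = (∫ ω, f ω ∂P) ∧ 0 ≤ h 0 ∧
    h 1 = -(∫ ω, g ω ∂P) ∧ h 1 ≤ 0 := by
  have h0 : h 0 = ∫ ω, f ω ∂P := by
    have e : A 0 = Set.univ := by
      rw [hA]; ext ω; simp [hf0 ω]
    rw [hh, e]; simp
  have h1 : h 1 = -(∫ ω, g ω ∂P) := by
    have e : A 1 =ᵐ[P] (∅ : Set Ω) := by
      rw [ae_eq_empty]
      rw [ae_iff] at hgpos
      rw [hA]
      convert hgpos using 3
      simp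
    have e' := e.compl
    rw [Set.compl_empty] at e'
    rw [hh, setIntegral_congr_set e, setIntegral_congr_set e']; simp
  refine ⟨?_, h0, ?_, h1, ?_⟩
  · intro a ha b hb hab
    have hsub : A b ⊆ A a := by
      intro ω hω
      rw [hA] at hω ⊢
      simp only [Set.mem_ofPred_eq] at hω ⊢
      nlinarith [mul_le_mul_of_nonneg_right hab (hg0 ω), mul_le_mul_of_nonneg_right hab (hf0 ω)]
    rw [hh, hh]
    have i1 : ∫ ω in A b, f ω ∂P ≤ ∫ ω in A a, f ω ∂P :=
      setIntegral_mono_set hfi.integrableOn (Filter.Eventually.of_forall hf0)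
        (Filter.Eventually.of_forall hsub)
    have i2 : ∫ ω in (A a)ᶜ, g ω ∂P ≤ ∫ ω in (A b)ᶜ, g ω ∂P :=
      setIntegral_mono_set hgi.integrableOn (Filter.Eventually.of_forall hg0)
        (Filter.Eventually.of_forall (Set.compl_subset_compl.mpr hsub))
    linarith
  · rw [h0]; exact integral_nonneg hf0
  · rw [h1]; exact neg_nonpos.mpr (integral_nonneg hg0)
end
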